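/- Let K ∈ ℝ, N ∈ (1,∞) and let a < b be real numbers; if K > 0 assume additionally that b − a ≤ π·√((N−1)/K). Let h be an MCP(K,N) density on (a,b) and let x ∈ (a,b) be a point where h is differentiable, with derivative h′(x). Then −(N−1)·(s′_{K/(N−1)}(b − x)/s_{K/(N−1)}(b − x))·h(x) ≤ h′(x) ≤ (N−1)·(s′_{K/(N−1)}(x − a)/s_{K/(N−1)}(x − a))·h(x). -/

import Mathlib

open Real MeasureTheory ENNReal

/-- The finite part of the distortion coefficient `σ_{K,N}^{(t)}(θ)`. -/
noncomputable def sigmaR (K N t θ : ℝ) : ℝ :=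
  if 0 < K * θ ^ 2 then
    Real.sin (t * θ * Real.sqrt (K / N)) / Real.sin (θ * Real.sqrt (K / N))
  else if K * θ ^ 2 = 0 ∨ N = 0 then t
  else Real.sinh (t * θ * Real.sqrt (-K / N)) / Real.sinh (θ * Real.sqrt (-K / N))

/-- The distortion coefficient `σ_{K,N}^{(t)}(θ)`, with value `+∞` when `K·θ² ≥ N·π²`. -/
noncomputable def sigmaE (K N t θ : ℝ) : ℝ≥0∞ :=
  if N * Real.pi ^ 2 ≤ K * θ ^ 2 then ⊤ else ENNReal.ofReal (sigmaR K N t θ)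

/-- `h` is an `MCP(K,N)` density on the interval `I ⊆ ℝ`:  `h` is nonnegative on `I` and
`h(t·x₁ + (1−t)·x₀) ≥ (σ_{K,N−1}^{(1−t)}(|x₁ − x₀|))^{N−1} · h(x₀)` for all `x₀, x₁ ∈ I`,
`t ∈ [0,1]`.  The inequality is formulated in `ℝ≥0∞` so that an infinite coefficient forces
`h(x₀) = 0`. -/
def IsMCPDensity (K N : ℝ) (I : Set ℝ) (h : ℝ → ℝ) : Prop :=
  (∀ x ∈ I, 0 ≤ h x) ∧
  ∀ x₀ ∈ I, ∀ x₁ ∈ I, ∀ t ∈ Set.Icc (0:ℝ) 1,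
    sigmaE K (N - 1) (1 - t) |x₁ - x₀| ^ (N - 1) * ENNReal.ofReal (h x₀)
      ≤ ENNReal.ofReal (h (t * x₁ + (1 - t) * x₀))

/-- The function `s_κ`. -/
noncomputable def sk (κ θ : ℝ) : ℝ :=
  if 0 < κ then Real.sin (Real.sqrt κ * θ) / Real.sqrt κ
  else if κ = 0 then θ
  else Real.sinh (Real.sqrt (-κ) * θ) / Real.sqrt (-κ)

/-- The derivative `s′_κ` of `s_κ`. -/
noncomputable def sk' (κ θ : ℝ) : ℝ :=
  if 0 < κ then Real.cos (Real.sqrt κ * θ)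
  else if κ = 0 then 1
  else Real.cosh (Real.sqrt (-κ) * θ)

/-! The `MCP(K,N)` inequality for a geodesic from `x` to `c` says that
`h z / s_κ(c - z) ^ (N - 1)`, with `κ = K / (N - 1)`, is at least as large at each `z ∈ [x, c)` as
at `x`. Letting `c → b` makes `h / s_κ(b - ·) ^ (N - 1)` nondecreasing on `(a, b)`, and the sign of
the derivative of this quotient is the lower bound on `h'`. Reflecting the interval gives the upper
bound.

The diameter condition is carried as `√κ * θ < π`, which is automatic for `κ ≤ 0` because then
`√κ = 0`. -/

open Filter Topology

theorem hasDerivAt_sk (κ θ : ℝ) : HasDerivAt (sk κ) (sk' κ θ) θ := by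
  unfold sk sk'
  rcases lt_trichotomy κ 0 with hκ | rfl | hκ
  · have hsqrt : √(-κ) ≠ 0 := (Real.sqrt_pos.2 (neg_pos.2 hκ)).ne'
    simp only [hκ.not_gt, hκ.ne, if_false]
    convert! (((hasDerivAt_id θ).const_mul √(-κ)).sinh).div_const √(-κ) using 1
    simp [hsqrt]
  · simpa only [lt_irrefl, if_false, if_true] using hasDerivAt_id' θ
  · have hsqrt : √κ ≠ 0 := (Real.sqrt_pos.2 hκ).ne'
    simp only [hκ, if_true]
    convert! (((hasDerivAt_id θ).const_mul √κ).sin).div_const √κ using 1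
    simp [hsqrt]

theorem continuous_sk (κ : ℝ) : Continuous (sk κ) :=
  continuous_iff_continuousAt.2 fun θ => (hasDerivAt_sk κ θ).continuousAt

theorem sk_pos {κ θ : ℝ} (hθ : 0 < θ) (hπ : √κ * θ < π) : 0 < sk κ θ := by
  unfold sk
  split_ifs with hpos hzero
  · have hsqrt : 0 < √κ := Real.sqrt_pos.2 hpos
    exact div_pos (Real.sin_pos_of_pos_of_lt_pi (mul_pos hsqrt hθ) hπ) hsqrt
  · exact hθ
  · have hsqrt : 0 < √(-κ) :=
      Real.sqrt_pos.2 (neg_pos.2 (lt_of_le_of_ne (not_lt.1 hpos) hzero))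
    exact div_pos (Real.sinh_pos_iff.2 (mul_pos hsqrt hθ)) hsqrt

theorem sigmaR_eq_sk_div_sk {K M θ : ℝ} (hM : 0 < M) (hθ : θ ≠ 0) (t : ℝ) :
    sigmaR K M t θ = sk (K / M) (t * θ) / sk (K / M) θ := by
  have hθsq : 0 < θ ^ 2 := sq_pos_of_ne_zero hθ
  unfold sigmaR sk
  rcases lt_trichotomy K 0 with hK | rfl | hK
  · have hκ : K / M < 0 := div_neg_of_neg_of_pos hK hM
    have hKθ : K * θ ^ 2 < 0 := mul_neg_of_neg_of_pos hK hθsq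
    have hsqrt : √(-(K / M)) ≠ 0 := (Real.sqrt_pos.2 (neg_pos.2 hκ)).ne'
    simp only [hKθ.not_gt, hKθ.ne, hM.ne', hκ.not_gt, hκ.ne, or_self, if_false]
    rw [div_div_div_cancel_right₀ hsqrt, neg_div, mul_comm (t * θ), mul_comm θ √_]
  · simp [hθ]
  · have hκ : 0 < K / M := div_pos hK hM
    have hsqrt : √(K / M) ≠ 0 := (Real.sqrt_pos.2 hκ).ne'
    simp only [mul_pos hK hθsq, hκ, if_true]
    rw [div_div_div_cancel_right₀ hsqrt, mul_comm (t * θ), mul_comm θ √_]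

theorem mul_sq_lt_mul_pi_sq {K M θ : ℝ} (hM : 0 < M) (hθ : 0 ≤ θ) (hπ : √(K / M) * θ < π) :
    K * θ ^ 2 < M * π ^ 2 := by
  have hκ : K / M ≤ √(K / M) ^ 2 := Real.sq_sqrt' (x := K / M) ▸ le_max_left _ _
  calc K * θ ^ 2 = M * (K / M * θ ^ 2) := by field_simp
    _ ≤ M * (√(K / M) * θ) ^ 2 := by rw [mul_pow]; gcongr
    _ < M * π ^ 2 := by gcongr

theorem sigmaE_eq_ofReal_sk_div_sk {K M θ : ℝ} (hM : 0 < M) (hθ : 0 < θ)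
    (hπ : √(K / M) * θ < π) (t : ℝ) :
    sigmaE K M t θ = ENNReal.ofReal (sk (K / M) (t * θ) / sk (K / M) θ) := by
  rw [sigmaE, if_neg (mul_sq_lt_mul_pi_sq hM hθ.le hπ).not_ge, sigmaR_eq_sk_div_sk hM hθ.ne']

theorem sqrt_div_mul_le_pi {K M L : ℝ} (hM : 0 < M) (hL : 0 < K → L ≤ π * √(M / K)) :
    √(K / M) * L ≤ π := by
  rcases le_or_gt K 0 with hK | hK
  · rw [Real.sqrt_eq_zero_of_nonpos (div_nonpos_of_nonpos_of_nonneg hK hM.le), zero_mul]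
    exact Real.pi_pos.le
  · have hsqrt : 0 < √(M / K) := Real.sqrt_pos.2 (div_pos hM hK)
    rw [← inv_div, Real.sqrt_inv, inv_mul_le_iff₀ hsqrt, mul_comm]
    exact hL hK

theorem sqrt_mul_lt_pi_of_lt {κ θ L : ℝ} (hθ : θ < L) (hL : √κ * L ≤ π) : √κ * θ < π := by
  rcases (Real.sqrt_nonneg κ).eq_or_lt with hzero | hpos
  · rw [← hzero, zero_mul]
    exact Real.pi_pos
  · exact (mul_lt_mul_of_pos_left hθ hpos).trans_le hL

theorem div_mul_le_of_monotoneOn_div {f g : ℝ → ℝ} {f' g' x : ℝ} {s : Set ℝ}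
    (hx : AccPt x (𝓟 s)) (hf : HasDerivWithinAt f f' s x) (hg : HasDerivWithinAt g g' s x)
    (hgx : 0 < g x) (hmono : MonotoneOn (fun z => f z / g z) s) : g' / g x * f x ≤ f' := by
  have hquot : 0 ≤ (f' * g x - f x * g') / g x ^ 2 :=
    (hf.fun_div hg hgx.ne').nonneg_of_monotoneOn hx hmono
  rw [le_div_iff₀ (by positivity), zero_mul, sub_nonneg] at hquot
  rwa [div_mul_eq_mul_div, div_le_iff₀ hgx, mul_comm g']

namespace IsMCPDensity

variable {K N : ℝ} {h : ℝ → ℝ}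

theorem comp_neg {I : Set ℝ} (hh : IsMCPDensity K N I h) :
    IsMCPDensity K N (-I) (fun x => h (-x)) := by
  refine ⟨fun x hx => hh.1 (-x) hx, fun x₀ hx₀ x₁ hx₁ t ht => ?_⟩
  have hdist : |-x₁ - -x₀| = |x₁ - x₀| := by rw [← neg_sub', abs_neg]
  have hpoint : t * -x₁ + (1 - t) * -x₀ = -(t * x₁ + (1 - t) * x₀) := by ring
  simpa only [hdist, hpoint] using hh.2 (-x₀) hx₀ (-x₁) hx₁ t ht

theorem sk_rpow_mul_le {I : Set ℝ} (hN : 1 < N) (hh : IsMCPDensity K N I h) {x z c : ℝ}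
    (hx : x ∈ I) (hz : z ∈ I) (hc : c ∈ I) (hxz : x ≤ z) (hzc : z < c)
    (hπ : √(K / (N - 1)) * (c - x) < π) :
    sk (K / (N - 1)) (c - z) ^ (N - 1) * h x ≤ sk (K / (N - 1)) (c - x) ^ (N - 1) * h z := by
  have hM : 0 < N - 1 := sub_pos.2 hN
  have hcx : 0 < c - x := by linarith
  have hcz : 0 < c - z := sub_pos.2 hzc
  have hskx : 0 < sk (K / (N - 1)) (c - x) := sk_pos hcx hπ
  have hskz : 0 < sk (K / (N - 1)) (c - z) := sk_pos hcz (lt_of_le_of_lt (by gcongr) hπ)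
  set t : ℝ := (z - x) / (c - x) with ht
  have ht_mem : t ∈ Set.Icc (0 : ℝ) 1 :=
    ⟨div_nonneg (sub_nonneg.2 hxz) hcx.le, (div_le_one hcx).2 (by linarith)⟩
  have hlength : (1 - t) * (c - x) = c - z := by rw [ht]; field_simp; ring
  have hpoint : t * c + (1 - t) * x = z := by linear_combination -hlength
  have hmcp := hh.2 x hx c hc t ht_mem
  rw [abs_of_pos hcx, sigmaE_eq_ofReal_sk_div_sk hM hcx hπ, hlength, hpoint,
    ENNReal.ofReal_rpow_of_pos (div_pos hskz hskx), ← ENNReal.ofReal_mul (by positivity),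
    ENNReal.ofReal_le_ofReal_iff (hh.1 z hz), Real.div_rpow hskz.le hskx.le] at hmcp
  rwa [div_mul_eq_mul_div, div_le_iff₀ (by positivity), mul_comm (h z)] at hmcp

variable {a b : ℝ}

theorem sk_rpow_mul_le_right_endpoint (hN : 1 < N) (hh : IsMCPDensity K N (Set.Ioo a b) h)
    {x z : ℝ} (hx : x ∈ Set.Ioo a b) (hz : z ∈ Set.Ioo a b) (hxz : x ≤ z)
    (hπ : √(K / (N - 1)) * (b - x) < π) :
    sk (K / (N - 1)) (b - z) ^ (N - 1) * h x ≤ sk (K / (N - 1)) (b - x) ^ (N - 1) * h z := by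
  have hcont (w r : ℝ) : Continuous fun c => sk (K / (N - 1)) (c - w) ^ (N - 1) * r :=
    (((continuous_sk _).comp (continuous_sub_right w)).rpow_const
      fun _ => Or.inr (sub_pos.2 hN).le).mul_const r
  refine le_of_tendsto_of_tendsto (b := 𝓝[<] b) ((hcont z (h x)).continuousWithinAt)
    ((hcont x (h z)).continuousWithinAt) ?_
  filter_upwards [Ioo_mem_nhdsLT hz.2] with c hc
  have hcb : c - x ≤ b - x := sub_le_sub_right hc.2.le x
  exact hh.sk_rpow_mul_le hN hx hz ⟨hz.1.trans hc.1, hc.2⟩ hxz hc.1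
    (lt_of_le_of_lt (by gcongr) hπ)

theorem monotoneOn_div_sk_rpow (hN : 1 < N) (hh : IsMCPDensity K N (Set.Ioo a b) h)
    (hπ : √(K / (N - 1)) * (b - a) ≤ π) :
    MonotoneOn (fun z => h z / sk (K / (N - 1)) (b - z) ^ (N - 1)) (Set.Ioo a b) := by
  have hlt (x : ℝ) (hx : x ∈ Set.Ioo a b) : √(K / (N - 1)) * (b - x) < π :=
    sqrt_mul_lt_pi_of_lt (sub_lt_sub_left hx.1 b) hπ
  have hpos (x : ℝ) (hx : x ∈ Set.Ioo a b) : 0 < sk (K / (N - 1)) (b - x) ^ (N - 1) :=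
    Real.rpow_pos_of_pos (sk_pos (sub_pos.2 hx.2) (hlt x hx)) _
  intro x hx z hz hxz
  rw [div_le_div_iff₀ (hpos x hx) (hpos z hz), mul_comm (h x), mul_comm (h z)]
  exact hh.sk_rpow_mul_le_right_endpoint hN hx hz hxz (hlt x hx)

theorem neg_mul_sk'_div_sk_mul_le_of_hasDerivAt (hN : 1 < N)
    (hh : IsMCPDensity K N (Set.Ioo a b) h) (hπ : √(K / (N - 1)) * (b - a) ≤ π)
    {x h' : ℝ} (hx : x ∈ Set.Ioo a b) (hderiv : HasDerivAt h h' x) :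
    -(N - 1) * (sk' (K / (N - 1)) (b - x) / sk (K / (N - 1)) (b - x)) * h x ≤ h' := by
  set κ := K / (N - 1)
  have hsk : 0 < sk κ (b - x) :=
    sk_pos (sub_pos.2 hx.2) (sqrt_mul_lt_pi_of_lt (sub_lt_sub_left hx.1 b) hπ)
  have hskM : HasDerivAt (fun z => sk κ (b - z) ^ (N - 1))
      (-sk' κ (b - x) * (N - 1) * sk κ (b - x) ^ (N - 1 - 1)) x :=
    ((hasDerivAt_sk κ (b - x)).comp_const_sub b x).rpow_const (Or.inl hsk.ne')
  have haccPt : AccPt x (𝓟 (Set.Ioo a b)) := isOpen_Ioo.preperfect x hx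
  have hbound := div_mul_le_of_monotoneOn_div haccPt hderiv.hasDerivWithinAt
    hskM.hasDerivWithinAt (Real.rpow_pos_of_pos hsk _) (hh.monotoneOn_div_sk_rpow hN hπ)
  rw [Real.rpow_sub_one hsk.ne'] at hbound
  convert! hbound using 2
  field_simp

theorem le_mul_sk'_div_sk_mul_of_hasDerivAt (hN : 1 < N)
    (hh : IsMCPDensity K N (Set.Ioo a b) h) (hπ : √(K / (N - 1)) * (b - a) ≤ π)
    {x h' : ℝ} (hx : x ∈ Set.Ioo a b) (hderiv : HasDerivAt h h' x) :
    h' ≤ (N - 1) * (sk' (K / (N - 1)) (x - a) / sk (K / (N - 1)) (x - a)) * h x := by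
  have hreflect : IsMCPDensity K N (Set.Ioo (-b) (-a)) fun y => h (-y) := by
    simpa only [Set.neg_Ioo] using hh.comp_neg
  have hderiv_reflect : HasDerivAt (fun y => h (-y)) (-h') (-x) := by
    simpa using HasDerivAt.comp_const_sub 0 (-x) (f := h) (by simpa using hderiv)
  have hbound := hreflect.neg_mul_sk'_div_sk_mul_le_of_hasDerivAt hN (by rwa [neg_sub_neg])
    ⟨neg_lt_neg hx.2, neg_lt_neg hx.1⟩ hderiv_reflect
  rw [neg_sub_neg, neg_neg] at hbound
  linarith

end IsMCPDensity

theorem mcp_density_deriv_bounds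
    (K N a b : ℝ) (hN : 1 < N) (hab : a < b)
    (hK : 0 < K → b - a ≤ Real.pi * Real.sqrt ((N - 1) / K))
    (h : ℝ → ℝ) (hh : IsMCPDensity K N (Set.Ioo a b) h)
    (x : ℝ) (hx : x ∈ Set.Ioo a b) (h' : ℝ) (hderiv : HasDerivAt h h' x) :
    -(N - 1) * (sk' (K / (N - 1)) (b - x) / sk (K / (N - 1)) (b - x)) * h x ≤ h' ∧
      h' ≤ (N - 1) * (sk' (K / (N - 1)) (x - a) / sk (K / (N - 1)) (x - a)) * h x := by
  have hπ : √(K / (N - 1)) * (b - a) ≤ π := sqrt_div_mul_le_pi (sub_pos.2 hN) hK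
  exact ⟨hh.neg_mul_sk'_div_sk_mul_le_of_hasDerivAt hN hπ hx hderiv,
    hh.le_mul_sk'_div_sk_mul_of_hasDerivAt hN hπ hx hderiv⟩
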